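/- arXiv:1603.01498 — 2 statements merged into one kernel-verified Lean document; each statement's English description precedes it below -/
import Mathlib

section
/- The iterated integral representation of multiple zeta values: ζ(n₁,…,n_r) = ∫_{0≤u_p≤⋯≤u₁≤1} ∏_{j=1}^p du_j/φ_j(u_j), where p = n₁+⋯+n_r, φ_j(u) = 1-u if j ∈ {n₁, n₁+n₂, …, p}, and φ_j(u) = u otherwise, assuming n₁ ≥ 2. -/
open MeasureTheory Finset

namespace MZV
open Classical in
noncomputable def ph (P : Prop) (x : ℝ) : ENNReal := ENNReal.ofReal (1 / (if P then 1 - x else x))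

def dom (p : ℕ) (t : ℝ) : Set (Fin p → ℝ) :=
  {u | (∀ j, 0 ≤ u j ∧ u j ≤ t) ∧ ∀ j k : Fin p, j ≤ k → u k ≤ u j}

noncomputable def L (p : ℕ) (b : ℕ → Prop) (t : ℝ) : ENNReal :=
  ∫⁻ u in dom p t, ∏ j : Fin p, ph (b j) (u j)

open Classical in
noncomputable def c : ℕ → (ℕ → Prop) → ℕ → ENNReal
  | 0, _, k => if k = 0 then 1 else 0
  | p + 1, b, k => (if b 0 then ∑ j ∈ range k, c p (fun i => b (i + 1)) j
      else c p (fun i => b (i + 1)) k) * (k : ENNReal)⁻¹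

open Classical in
noncomputable def T (r : ℕ) (n : Fin r → ℕ) (m : ℕ∞) : ENNReal :=
  ∑' k : Fin r → ℕ, if ((∀ i, 1 ≤ k i) ∧ ∀ i j : Fin r, i < j → k j < k i) ∧ ∀ i, (k i : ℕ∞) < m
    then ∏ i, ((k i : ENNReal)⁻¹) ^ (n i) else 0

def bw (r : ℕ) (n : Fin r → ℕ) (j : ℕ) : Prop := ∃ i : Fin r, j + 1 = ∑ i' ∈ Finset.Iic i, n i'

lemma measurableSet_dom (p : ℕ) (t : ℝ) : MeasurableSet (dom p t) := by
  unfold dom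
  simp only [Set.ofPred_and, Set.ofPred_forall]
  refine MeasurableSet.inter ?_ ?_
  · refine MeasurableSet.iInter fun j => ?_
    exact (measurableSet_le measurable_const (measurable_pi_apply j)).inter
      (measurableSet_le (measurable_pi_apply j) measurable_const)
  · refine MeasurableSet.iInter fun j => MeasurableSet.iInter fun k => MeasurableSet.iInter fun _ => ?_
    exact measurableSet_le (measurable_pi_apply k) (measurable_pi_apply j)

lemma measurable_ph (P : Prop) : Measurable (ph P) := by
  unfold ph
  by_cases h : P <;> simp only [h, if_true, if_false] <;> fun_prop

lemma measurable_prod (p : ℕ) (b : ℕ → Prop) :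
    Measurable (fun u : Fin p → ℝ => ∏ j : Fin p, ph (b j) (u j)) :=
  Finset.measurable_prod _ fun j _ => (measurable_ph _).comp (measurable_pi_apply j)

lemma cons_mem_dom (p : ℕ) (t x : ℝ) (u : Fin p → ℝ) :
    (Fin.cons x u : Fin (p+1) → ℝ) ∈ dom (p+1) t ↔ x ∈ Set.Icc 0 t ∧ u ∈ dom p x := by
  simp only [dom, Set.mem_ofPred_eq, Fin.forall_fin_succ, Fin.cons_zero, Fin.cons_succ, Set.mem_Icc,
    Fin.succ_le_succ_iff]
  constructor
  · rintro ⟨⟨h1, h2⟩, ⟨h3, h4⟩, h5⟩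
    exact ⟨h1, fun j => ⟨(h2 j).1, h4 j (Fin.zero_le _)⟩, fun i j hij => (h5 i).2 j hij⟩
  · rintro ⟨h1, h2, h3⟩
    refine ⟨⟨h1, fun j => ⟨(h2 j).1, (h2 j).2.trans h1.2⟩⟩, ⟨fun _ => le_rfl, fun j _ => (h2 j).2⟩,
      fun i => ⟨fun h => ?_, h3 i⟩⟩
    simp at h

lemma L_succ (p : ℕ) (b : ℕ → Prop) (t : ℝ) :
    L (p+1) b t = ∫⁻ x in Set.Icc 0 t, ph (b 0) x * L p (fun i => b (i+1)) x := by
  unfold L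
  rw [← lintegral_indicator (measurableSet_dom _ _), ← lintegral_indicator measurableSet_Icc]
  have e := (volume_preserving_piFinSuccAbove (fun _ : Fin (p+1) => ℝ) 0).symm
  rw [← e.lintegral_comp_emb (MeasurableEquiv.measurableEmbedding _)]
  rw [Measure.volume_eq_prod, lintegral_prod]
  · refine lintegral_congr fun x => ?_
    have key : ∀ u : Fin p → ℝ, (MeasurableEquiv.piFinSuccAbove (fun _ : Fin (p+1) => ℝ) 0).symm (x, u)
        = Fin.cons x u := by
      intro u
      simp [MeasurableEquiv.piFinSuccAbove, Fin.insertNthEquiv]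
    simp only [key]
    by_cases hx : x ∈ Set.Icc 0 t
    · rw [Set.indicator_of_mem hx, ← lintegral_const_mul _ (measurable_prod p (fun i => b (i+1))),
        ← lintegral_indicator (measurableSet_dom _ _)]
      refine lintegral_congr fun u => ?_
      by_cases hu : u ∈ dom p x
      · rw [Set.indicator_of_mem ((cons_mem_dom _ _ _ _).2 ⟨hx, hu⟩), Set.indicator_of_mem hu,
          Fin.prod_univ_succ]
        simp
      · rw [Set.indicator_of_notMem (fun h => hu ((cons_mem_dom _ _ _ _).1 h).2),
          Set.indicator_of_notMem hu]
    · rw [Set.indicator_of_notMem hx]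
      rw [← lintegral_zero (μ := (volume : Measure (Fin p → ℝ)))]
      refine lintegral_congr fun u => ?_
      rw [Set.indicator_of_notMem (fun h => hx ((cons_mem_dom _ _ _ _).1 h).1)]
  · refine Measurable.aemeasurable ?_
    exact ((measurable_prod _ _).indicator (measurableSet_dom _ _)).comp
      (MeasurableEquiv.measurable _)

lemma c_zero (p : ℕ) : ∀ (b : ℕ → Prop), b p → c (p+1) b 0 = 0 := by
  induction p with
  | zero => intro b h; simp [c, h]
  | succ p ih =>
    intro b h
    rw [c]
    by_cases h0 : b 0
    · simp [h0]
    · simp [h0, ih (fun i => b (i+1)) h]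

lemma lint_pow (t : ℝ) (h0 : 0 ≤ t) (k : ℕ) :
    ∫⁻ x in Set.Icc 0 t, ENNReal.ofReal x ^ k =
      ENNReal.ofReal t ^ (k+1) * ((k + 1 : ℕ) : ENNReal)⁻¹ := by
  have : ∫⁻ x in Set.Icc 0 t, ENNReal.ofReal x ^ k = ∫⁻ x in Set.Icc 0 t, ENNReal.ofReal (x ^ k) := by
    refine setLIntegral_congr_fun measurableSet_Icc fun x hx => ?_
    exact (ENNReal.ofReal_pow hx.1 _).symm
  rw [this, ← ofReal_integral_eq_lintegral_ofReal]
  · rw [integral_Icc_eq_integral_Ioc, ← intervalIntegral.integral_of_le h0, integral_pow,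
      div_eq_mul_inv, ENNReal.ofReal_mul (by simp; positivity), ENNReal.ofReal_inv_of_pos (by positivity)]
    simp only [ne_eq, Nat.add_eq_zero_iff, one_ne_zero, and_false, not_false_eq_true, zero_pow,
      sub_zero]
    rw [ENNReal.ofReal_pow h0]
    congr 2
    rw [← ENNReal.ofReal_natCast]; simp
  · exact (continuous_pow k).continuousOn.integrableOn_Icc
  · refine (ae_restrict_iff' measurableSet_Icc).2 (Filter.Eventually.of_forall fun x hx => ?_)
    exact pow_nonneg hx.1 _

lemma lint_series (t : ℝ) (h0 : 0 ≤ t) (d : ℕ → ENNReal) :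
    ∫⁻ x in Set.Icc 0 t, ∑' k, d k * ENNReal.ofReal x ^ k =
      ∑' k, (d k * ((k + 1 : ℕ) : ENNReal)⁻¹) * ENNReal.ofReal t ^ (k+1) := by
  rw [lintegral_tsum (fun k => by fun_prop)]
  refine tsum_congr fun k => ?_
  rw [lintegral_const_mul _ (by fun_prop), lint_pow t h0]
  ring

lemma cauchy (f : ℕ → ENNReal) (X : ENNReal) :
    (∑' m, X ^ m) * (∑' j, f j * X ^ j) = ∑' k, (∑ j ∈ range (k+1), f j) * X ^ k := by
  have h1 : ∀ k, (∑ j ∈ range (k+1), f j) * X ^ k =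
      ∑' q : antidiagonal k, f q.1.1 * X ^ (q.1.1 + q.1.2) := by
    intro k
    rw [tsum_fintype, Finset.sum_coe_sort (antidiagonal k) (fun q => f q.1 * X ^ (q.1 + q.2)),
      Finset.sum_mul, Finset.Nat.sum_antidiagonal_eq_sum_range_succ (fun i j => f i * X ^ (i + j))]
    refine Finset.sum_congr rfl fun j hj => ?_
    rw [Nat.add_sub_cancel' (by simpa [Nat.lt_succ_iff] using hj)]
  simp_rw [h1]
  rw [← ENNReal.tsum_sigma (fun k (q : antidiagonal k) => f q.1.1 * X ^ (q.1.1 + q.1.2)),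
    ← Equiv.tsum_eq (Finset.HasAntidiagonal.sigmaAntidiagonalEquivProd (A := ℕ)).symm
      (fun q : (Σ k : ℕ, antidiagonal k) => f q.2.1.1 * X ^ (q.2.1.1 + q.2.1.2)), ENNReal.tsum_prod', mul_comm,
    ← ENNReal.tsum_mul_right]
  refine tsum_congr fun j => ?_
  rw [← ENNReal.tsum_mul_left]
  refine tsum_congr fun m => ?_
  simp [Finset.HasAntidiagonal.sigmaAntidiagonalEquivProd, pow_add, mul_assoc]

lemma L_eq (p : ℕ) : ∀ (b : ℕ → Prop) (t : ℝ), 0 ≤ t → t ≤ 1 → (∀ q, p = q + 1 → b q) →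
    L p b t = ∑' k, c p b k * ENNReal.ofReal t ^ k := by
  induction p with
  | zero =>
    intro b t h0 h1 _
    rw [tsum_eq_single 0 (by intro k hk; simp [c, hk])]
    have : dom 0 t = Set.univ := by ext u; simp [dom]
    simp [L, this, c, volume_pi]
  | succ p ih =>
    intro b t h0 h1 hb
    rw [L_succ]
    have hb' : ∀ q, p = q + 1 → b (q + 1) := fun q hq => hq ▸ hb p rfl
    have hc0 := c_zero p b (hb p rfl)
    rw [tsum_eq_zero_add' ENNReal.summable, hc0, zero_mul, zero_add]
    have step : ∃ d : ℕ → ENNReal, (∀ k, c (p+1) b (k+1) = d k * ((k+1 : ℕ) : ENNReal)⁻¹) ∧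
        ∀ x : ℝ, 0 < x → x < 1 → ph (b 0) x * ∑' k, c p (fun i => b (i+1)) k * ENNReal.ofReal x ^ k
          = ∑' k, d k * ENNReal.ofReal x ^ k := by
      by_cases hb0 : b 0
      · refine ⟨fun k => ∑ j ∈ range (k+1), c p (fun i => b (i+1)) j, fun k => by simp [c, hb0], ?_⟩
        intro x hx0 hx1
        rw [← cauchy, ENNReal.tsum_geometric]
        congr 1
        simp only [ph, hb0, if_true, one_div]
        rw [ENNReal.ofReal_inv_of_pos (by linarith), ENNReal.ofReal_sub _ hx0.le, ENNReal.ofReal_one]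
      · refine ⟨fun k => c p (fun i => b (i+1)) (k+1), fun k => by simp [c, hb0], ?_⟩
        intro x hx0 hx1
        obtain ⟨q, rfl⟩ : ∃ q, p = q + 1 := by
          cases p with
          | zero => exact absurd (hb 0 rfl) hb0
          | succ q => exact ⟨q, rfl⟩
        rw [tsum_eq_zero_add' ENNReal.summable, c_zero q _ (hb' q rfl), zero_mul, zero_add,
          ← ENNReal.tsum_mul_left]
        refine tsum_congr fun k => ?_
        simp only [ph, hb0, if_false, one_div]
        rw [ENNReal.ofReal_inv_of_pos hx0, pow_succ]
        have h2 : (ENNReal.ofReal x)⁻¹ * ENNReal.ofReal x = 1 :=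
          ENNReal.inv_mul_cancel (by simpa using hx0) ENNReal.ofReal_ne_top
        calc _ = c (q+1) (fun i => b (i+1)) (k+1) * ENNReal.ofReal x ^ k *
              ((ENNReal.ofReal x)⁻¹ * ENNReal.ofReal x) := by ring
          _ = _ := by rw [h2, mul_one]
    obtain ⟨d, hd1, hd2⟩ := step
    simp_rw [hd1]
    rw [← lint_series t h0, ← setLIntegral_congr Ioo_ae_eq_Icc, ← setLIntegral_congr Ioo_ae_eq_Icc]
    refine setLIntegral_congr_fun measurableSet_Ioo fun x hx => ?_
    have hx1 : x < 1 := hx.2.trans_le h1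
    rw [ih _ x hx.1.le hx1.le hb', hd2 x hx.1 hx1]

lemma c_add (a : ℕ) : ∀ (q : ℕ) (b : ℕ → Prop) (k : ℕ), (∀ i < a, ¬ b i) →
    c (q + a) b k = c q (fun i => b (i + a)) k * ((k : ENNReal)⁻¹) ^ a := by
  induction a with
  | zero => intro q b k _; simp
  | succ a ih =>
    intro q b k h
    rw [← add_assoc, c, if_neg (h 0 (Nat.succ_pos _)), ih _ _ _ (fun i hi => h (i+1) (by omega))]
    simp only [pow_succ, add_assoc, mul_assoc]

lemma T_zero (n : Fin 0 → ℕ) (m : ℕ∞) : T 0 n m = 1 := by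
  unfold T
  rw [tsum_fintype]
  simp

lemma T_succ (r : ℕ) (n : Fin (r+1) → ℕ) (m : ℕ∞) : T (r+1) n m =
    ∑' j : ℕ, if 1 ≤ j ∧ (j : ℕ∞) < m then ((j : ENNReal)⁻¹) ^ (n 0) * T r (Fin.tail n) j else 0 := by
  unfold T
  rw [← (Fin.consEquiv (fun _ : Fin (r+1) => ℕ)).tsum_eq, ENNReal.tsum_prod']
  refine tsum_congr fun j => ?_
  by_cases hj : 1 ≤ j ∧ (j : ℕ∞) < m
  · rw [if_pos hj, ← ENNReal.tsum_mul_left]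
    refine tsum_congr fun k => ?_
    rw [mul_ite, mul_zero]
    refine if_congr ?_ ?_ rfl
    · simp only [Fin.consEquiv, Equiv.coe_fn_mk, Fin.forall_fin_succ, Fin.cons_zero, Fin.cons_succ,
        Fin.succ_lt_succ_iff, Nat.cast_lt]
      constructor
      · rintro ⟨⟨⟨h1, h2⟩, ⟨h3, h4⟩, h5⟩, h6, h7⟩
        exact ⟨⟨h2, fun i l hil => (h5 i).2 l hil⟩, fun i => h4 i (Fin.succ_pos _)⟩
      · rintro ⟨⟨h1, h2⟩, h3⟩
        refine ⟨⟨⟨hj.1, h1⟩, ⟨fun h => absurd h (lt_irrefl _), fun i _ => h3 i⟩,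
          fun i => ⟨fun h => absurd h (by simp), h2 i⟩⟩, hj.2, fun i => ?_⟩
        exact lt_trans (by exact_mod_cast h3 i) hj.2
    · rw [Fin.prod_univ_succ]
      simp [Fin.consEquiv, Fin.tail]
  · rw [if_neg hj]
    refine ENNReal.tsum_eq_zero.2 fun k => if_neg fun h => hj ⟨?_, ?_⟩
    · simpa [Fin.consEquiv] using h.1.1 0
    · simpa [Fin.consEquiv] using h.2 0

lemma sum_Iic_succ (r : ℕ) (n : Fin (r+1) → ℕ) (i : Fin r) :
    ∑ i' ∈ Iic i.succ, n i' = n 0 + ∑ i' ∈ Iic i, Fin.tail n i' := by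
  have h : Iic i.succ = insert 0 ((Iic i).map (Fin.succEmb r)) := by
    ext x
    cases x using Fin.cases with
    | zero => simp
    | succ x => simp
  rw [h, Finset.sum_insert (by simp), Finset.sum_map]
  rfl

lemma c_eq (r : ℕ) : ∀ (n : Fin r → ℕ) (m : ℕ∞), (∀ i, 1 ≤ n i) → m ≠ 0 →
    (∑' j : ℕ, if (j : ℕ∞) < m then c (∑ i, n i) (bw r n) j else 0) = T r n m := by
  induction r with
  | zero =>
    intro n m _ hm
    rw [T_zero, tsum_eq_single 0 (by intro k hk; simp [c, hk])]
    simp [c, pos_iff_ne_zero, hm]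
  | succ r ih =>
    intro n m hn hm
    rw [T_succ]
    refine tsum_congr fun j => ?_
    obtain ⟨a, ha⟩ : ∃ a, n 0 = a + 1 := ⟨n 0 - 1, by have := hn 0; omega⟩
    have hs : ∑ i, n i = (∑ i, Fin.tail n i) + 1 + a := by
      rw [Fin.sum_univ_succ, ha]; simp only [Fin.tail]; ring
    have hI0 : ∑ i' ∈ Iic (0 : Fin (r+1)), n i' = a + 1 := by
      rw [← ha]; 
      have : Iic (0 : Fin (r+1)) = {0} := by ext x; simp
      simp [this]
    have hb1 : ∀ i < a, ¬ bw (r+1) n i := by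
      rintro i hi ⟨l, hl⟩
      cases l using Fin.cases with
      | zero => omega
      | succ l => rw [sum_Iic_succ] at hl; omega
    have hb2 : bw (r+1) n (0 + a) := ⟨0, by omega⟩
    have hb3 : (fun i => bw (r+1) n (i + 1 + a)) = bw r (Fin.tail n) := by
      ext i
      unfold bw
      rw [Fin.exists_fin_succ]
      constructor
      · rintro (h | ⟨l, hl⟩)
        · omega
        · exact ⟨l, by rw [sum_Iic_succ] at hl; omega⟩
      · rintro ⟨l, hl⟩
        exact Or.inr ⟨l, by rw [sum_Iic_succ]; omega⟩
    rw [hs, c_add a _ _ _ hb1, c, if_pos hb2, hb3, mul_assoc, ← pow_succ', ← ha]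
    rcases Nat.eq_zero_or_pos j with rfl | hj
    · simp
    · have := ih (Fin.tail n) (j : ℕ∞) (fun i => hn _) (by exact_mod_cast hj.ne')
      rw [← this]
      have h2 : (∑' l : ℕ, if (l : ℕ∞) < (j : ℕ∞) then c (∑ i, Fin.tail n i) (bw r (Fin.tail n)) l else 0)
          = ∑ l ∈ range j, c (∑ i, Fin.tail n i) (bw r (Fin.tail n)) l := by
        rw [tsum_eq_sum (s := range j)]
        · refine Finset.sum_congr rfl fun l hl => if_pos ?_
          exact_mod_cast Finset.mem_range.1 hl
        · intro l hl
          refine if_neg ?_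
          simpa using hl
      rw [h2]
      have : 1 ≤ j := hj
      simp only [this, true_and]
      rw [mul_comm]

lemma bw_last (r : ℕ) (hr : 0 < r) (n : Fin r → ℕ) (q : ℕ) (h : ∑ i, n i = q + 1) : bw r n q := by
  refine ⟨⟨r - 1, by omega⟩, ?_⟩
  rw [← h]
  refine Finset.sum_congr ?_ fun _ _ => rfl
  ext x
  simp only [Finset.mem_univ, Finset.mem_Iic, true_iff, Fin.le_def]
  omega

end MZV

/-- The iterated integral representation of multiple zeta values:
for n₁ ≥ 2 (and all nᵢ ≥ 1), with p = n₁ + ⋯ + n_r,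
ζ(n₁,…,n_r) = ∫_{0 ≤ u_p ≤ ⋯ ≤ u₁ ≤ 1} ∏ du_j/φ_j(u_j),
where φ_j(u) = 1-u if j is one of the partial sums n₁, n₁+n₂, …, p, and
φ_j(u) = u otherwise.  Here the variable `u i` for `i : Fin p` stands for
`u_{i+1}`, so the simplex condition is that `u` is antitone and takes values
in [0,1]. -/
theorem mzv_iterated_integral_representation
    (r : ℕ) (hr : 0 < r) (n : Fin r → ℕ)
    (hn1 : ∀ i, 1 ≤ n i) (hn2 : 2 ≤ n ⟨0, hr⟩) :
    ∑' k : {k : Fin r → ℕ //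
        (∀ i, 1 ≤ k i) ∧ ∀ i j : Fin r, i < j → k j < k i},
      ∏ i, (1 : ℝ) / (k.1 i : ℝ) ^ (n i) =
    ∫ u in {u : Fin (∑ i, n i) → ℝ |
        (∀ j, 0 ≤ u j ∧ u j ≤ 1) ∧ ∀ j k : Fin (∑ i, n i), j ≤ k → u k ≤ u j},
      ∏ j : Fin (∑ i, n i), 1 / (if ∃ i : Fin r, (j : ℕ) + 1 = ∑ i' ∈ Finset.Iic i, n i'
                then 1 - u j else u j)
      ∂(volume : Measure (Fin (∑ i, n i) → ℝ)) := by
  open MZV in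
  have hL : L (∑ i, n i) (bw r n) 1 = T r n ⊤ := by
    rw [L_eq _ _ 1 zero_le_one le_rfl (fun q hq => bw_last r hr n q hq), ← c_eq r n ⊤ hn1 (by simp)]
    simp
  rw [integral_eq_lintegral_of_nonneg_ae]
  · have h1 : ∀ u ∈ MZV.dom (∑ i, n i) 1, ENNReal.ofReal (∏ j : Fin (∑ i, n i), 1 / (if ∃ i : Fin r, (j : ℕ) + 1 = ∑ i' ∈ Finset.Iic i, n i'
                then 1 - u j else u j)) = ∏ j : Fin (∑ i, n i), MZV.ph (MZV.bw r n j) (u j) := by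
      intro u hu
      rw [ENNReal.ofReal_prod_of_nonneg]
      · refine Finset.prod_congr rfl fun j _ => ?_
        unfold MZV.ph MZV.bw
        congr
      · intro j _
        have := hu.1 j
        split_ifs
        · exact one_div_nonneg.2 (by linarith)
        · exact one_div_nonneg.2 (by linarith)
    have h2 := setLIntegral_congr_fun (μ := volume) (MZV.measurableSet_dom (∑ i, n i) 1) h1
    have h3 := h2.trans hL
    unfold MZV.dom at h3
    rw [h3]
    have h4 : MZV.T r n ⊤ = ∑' k : {k : Fin r → ℕ //
        (∀ i, 1 ≤ k i) ∧ ∀ i j : Fin r, i < j → k j < k i}, ∏ i, ((k.1 i : ENNReal)⁻¹) ^ (n i) := by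
      unfold MZV.T
      have := tsum_subtype {k : Fin r → ℕ | (∀ i, 1 ≤ k i) ∧ ∀ i j : Fin r, i < j → k j < k i}
        (fun k => ∏ i, ((k i : ENNReal)⁻¹) ^ (n i))
      refine Eq.trans ?_ this.symm
      refine tsum_congr fun k => ?_
      simp [Set.indicator_apply]
    rw [h4, ENNReal.tsum_toReal_eq]
    · refine tsum_congr fun k => ?_
      rw [ENNReal.toReal_prod]
      simp
    · intro k
      refine ENNReal.prod_ne_top fun i _ => ENNReal.pow_ne_top (ENNReal.inv_ne_top.2 ?_)
      have := k.2.1 i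
      exact_mod_cast (by omega : k.1 i ≠ 0)
  · refine (ae_restrict_iff' (MZV.measurableSet_dom (∑ i, n i) 1)).2
      (Filter.Eventually.of_forall fun u hu => ?_)
    refine Finset.prod_nonneg fun j _ => ?_
    have := hu.1 j
    split_ifs
    · exact one_div_nonneg.2 (by linarith)
    · exact one_div_nonneg.2 (by linarith)
  · refine Measurable.aestronglyMeasurable ?_
    refine Finset.measurable_prod _ fun j _ => ?_
    split_ifs <;> fun_prop
end

section
/- For the two-coloured rooted tree τ with black root (colour 0), one black child, and that child having two white children (colour 1) — i.e. the tree whose arborification gives 2x₀x₀x₁x₁ + x₀x₁x₀x₁ — the arborified multiple zeta value equals 2ζ(3,1) + ζ(2,2). -/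
open MeasureTheory

/-- The double zeta value ζ(m,n) = ∑_{k > l ≥ 1} 1/(kᵐ lⁿ). -/
noncomputable def zeta2 (m n : ℕ) : ℝ :=
  ∑' p : {p : ℕ × ℕ // p.2 < p.1 ∧ 1 ≤ p.2},
    (1 : ℝ) / ((p.1.1 : ℝ) ^ m * (p.1.2 : ℝ) ^ n)

open Set

lemma ftc_aux (a b : ℝ) (hab : a ≤ b) (F f : ℝ → ℝ) (hF : ContinuousOn F (Icc a b))
    (hd : ∀ x ∈ Ioo a b, HasDerivAt F (f x) x) (hf : ∀ x ∈ Ioo a b, 0 ≤ f x) :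
    ∫⁻ x in Ioo a b, ENNReal.ofReal (f x) = ENNReal.ofReal (F b - F a) := by
  have hi : IntegrableOn f (Ioc a b) := intervalIntegral.integrableOn_deriv_of_nonneg hF hd hf
  have h2 := intervalIntegral.integral_eq_sub_of_hasDerivAt_of_le hab hF hd
    ((intervalIntegrable_iff_integrableOn_Ioc_of_le hab).2 hi)
  rw [intervalIntegral.integral_of_le hab, integral_Ioc_eq_integral_Ioo] at h2
  rw [← h2, ofReal_integral_eq_lintegral_ofReal (hi.mono_set Ioo_subset_Ioc_self)]
  exact (ae_restrict_iff' measurableSet_Ioo).2 (ae_of_all _ hf)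

lemma int_log (x : ℝ) (hx : 0 < x) (hx1 : x ≤ 1) :
    ∫⁻ y in Icc x 1, ENNReal.ofReal (1 / y) = ENNReal.ofReal (-Real.log x) := by
  rw [← setLIntegral_congr Ioo_ae_eq_Icc, ftc_aux x 1 hx1 Real.log]
  · simp
  · exact Real.continuousOn_log.mono (fun y hy => by
      have := hy.1; simp; linarith)
  · intro y hy
    rw [one_div]
    exact Real.hasDerivAt_log (by linarith [hy.1])
  · intro y hy
    have : 0 < y := by linarith [hy.1]
    positivity

lemma int_one (y : ℝ) (hy : 0 < y) (hy1 : y < 1) (a : ℕ) :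
    ∫⁻ x in Ioo 0 y, ENNReal.ofReal (-Real.log x * x ^ a) =
      ENNReal.ofReal (-Real.log y * y ^ (a+1) / (a+1) + y ^ (a+1) / (a+1)^2) := by
  rw [ftc_aux 0 y hy.le (fun x => -(x * Real.log x) * x ^ a / (a+1) + x ^ (a+1) / (a+1)^2)]
  · congr 1
    simp
    ring
  · have := Real.continuous_mul_log
    apply Continuous.continuousOn
    fun_prop
  · intro x hx
    have h0 : x ≠ 0 := hx.1.ne'
    have h1 := ((((Real.hasDerivAt_log h0).neg.mul (hasDerivAt_pow (a+1) x)).div_const ((a:ℝ)+1)).add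
      ((hasDerivAt_pow (a+1) x).div_const (((a:ℝ)+1)^2)))
    have ha : (a:ℝ)+1 ≠ 0 := by positivity
    refine (h1.congr_of_eventuallyEq (Filter.Eventually.of_forall fun z => ?_)).congr_deriv ?_
    · simp; ring
    · simp
      field_simp
      ring
  · intro x hx
    have := Real.log_nonpos hx.1.le (by linarith [hx.2])
    have := hx.1
    apply mul_nonneg <;> [linarith; positivity]

lemma int_two (a b : ℕ) :
    ∫⁻ y in Ioo (0:ℝ) 1, ENNReal.ofReal (-Real.log y * y ^ b) *
      ENNReal.ofReal (-Real.log y * y ^ (a+1) / (a+1) + y ^ (a+1) / (a+1)^2) =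
    ENNReal.ofReal (2 * (1 / (((a:ℝ)+b+2)^3 * ((a:ℝ)+1)^1)) + 1 / (((a:ℝ)+b+2)^2 * ((a:ℝ)+1)^2)) := by
  have hnn : ∀ y ∈ Ioo (0:ℝ) 1, 0 ≤ -Real.log y * y ^ b := by
    intro x hx
    have := Real.log_nonpos hx.1.le hx.2.le
    have := hx.1
    apply mul_nonneg <;> [linarith; positivity]
  have hnn2 : ∀ y ∈ Ioo (0:ℝ) 1, 0 ≤ -Real.log y * y ^ (a+1) / (a+1) + y ^ (a+1) / (a+1)^2 := by
    intro x hx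
    have h1 := Real.log_nonpos hx.1.le hx.2.le
    have h2 := hx.1
    have : 0 ≤ -Real.log x := by linarith
    positivity
  rw [setLIntegral_congr_fun measurableSet_Ioo (g := fun y => ENNReal.ofReal
    ((-Real.log y * y ^ b) * (-Real.log y * y ^ (a+1) / (a+1) + y ^ (a+1) / (a+1)^2)))
    (fun y hy => (ENNReal.ofReal_mul (hnn y hy)).symm)]
  rw [ftc_aux 0 1 zero_le_one (fun y =>
    ((y * Real.log y)^2 * y ^ (a+b) / (a+b+2) - 2 * (y * Real.log y) * y^(a+b+1)/(a+b+2)^2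
      + 2 * y^(a+b+2)/(a+b+2)^3) / (a+1)
      + (-(y * Real.log y) * y ^ (a+b+1) / (a+b+2) + y ^ (a+b+2) / (a+b+2)^2) / (a+1)^2)]
  · congr 1
    simp
    field_simp
  · have := Real.continuous_mul_log
    apply Continuous.continuousOn
    fun_prop
  · intro x hx
    have h0 : x ≠ 0 := hx.1.ne'
    have hl := Real.hasDerivAt_log h0
    have hp := hasDerivAt_pow (a+b+2) x
    have h1 := ((((((hl.pow 2).mul hp).div_const ((a:ℝ)+b+2)).sub
      (((hl.const_mul 2).mul hp).div_const (((a:ℝ)+b+2)^2))).add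
      ((hp.const_mul 2).div_const (((a:ℝ)+b+2)^3))).div_const ((a:ℝ)+1)).add
      ((((hl.neg.mul hp).div_const ((a:ℝ)+b+2)).add
      (hp.div_const (((a:ℝ)+b+2)^2))).div_const (((a:ℝ)+1)^2))
    have ha : (a:ℝ)+1 ≠ 0 := by positivity
    have hb : (a:ℝ)+b+2 ≠ 0 := by positivity
    refine (h1.congr_of_eventuallyEq (Filter.Eventually.of_forall fun z => ?_)).congr_deriv ?_
    · simp; ring
    · simp
      field_simp
      ring
  · intro x hx
    exact mul_nonneg (hnn x hx) (hnn2 x hx)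

lemma geom_aux (x : ℝ) (hx : 0 < x) (hx1 : x < 1) :
    ENNReal.ofReal (-Real.log x / (1 - x)) = ∑' a : ℕ, ENNReal.ofReal (-Real.log x * x ^ a) := by
  have hl : 0 ≤ -Real.log x := by linarith [Real.log_nonpos hx.le hx1.le]
  rw [← ENNReal.ofReal_tsum_of_nonneg (fun n => by positivity)
    ((summable_geometric_of_lt_one hx.le hx1).mul_left _), tsum_mul_left,
    tsum_geometric_of_lt_one hx.le hx1, div_eq_mul_inv]

lemma iter_eq : ∫⁻ z in Ioo (0:ℝ) 1, ENNReal.ofReal (-Real.log z / (1 - z)) *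
      ∫⁻ x in Ioo 0 z, ENNReal.ofReal (-Real.log x / (1 - x)) =
    ∑' b : ℕ, ∑' a : ℕ, ENNReal.ofReal
      (2 * (1 / (((a:ℝ)+b+2)^3 * ((a:ℝ)+1)^1)) + 1 / (((a:ℝ)+b+2)^2 * ((a:ℝ)+1)^2)) := by
  have h : ∀ z ∈ Ioo (0:ℝ) 1, ENNReal.ofReal (-Real.log z / (1 - z)) *
      ∫⁻ x in Ioo 0 z, ENNReal.ofReal (-Real.log x / (1 - x)) =
      ∑' b : ℕ, ∑' a : ℕ, ENNReal.ofReal (-Real.log z * z ^ b) *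
      ENNReal.ofReal (-Real.log z * z ^ (a+1) / (a+1) + z ^ (a+1) / (a+1)^2) := by
    intro z hz
    rw [geom_aux z hz.1 hz.2, ← ENNReal.tsum_mul_right]
    congr 1; ext b
    rw [ENNReal.tsum_mul_left]
    congr 1
    rw [setLIntegral_congr_fun measurableSet_Ioo
      (fun x hx => geom_aux x hx.1 (hx.2.trans hz.2)), lintegral_tsum]
    · congr 1; ext a
      rw [int_one z hz.1 hz.2]
    · intro a
      fun_prop
  rw [setLIntegral_congr_fun measurableSet_Ioo h, lintegral_tsum]
  · congr 1; ext b
    rw [lintegral_tsum]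
    · congr 1; ext a
      exact int_two a b
    · intro a; fun_prop
  · intro b
    exact AEMeasurable.tsum (fun a => by fun_prop)

def eqv : ℕ × ℕ ≃ {p : ℕ × ℕ // p.2 < p.1 ∧ 1 ≤ p.2} where
  toFun q := ⟨(q.2 + q.1 + 2, q.2 + 1), by constructor <;> simp⟩
  invFun p := (p.1.1 - p.1.2 - 1, p.1.2 - 1)
  left_inv q := by ext <;> simp <;> omega
  right_inv p := by
    obtain ⟨⟨k, l⟩, h1, h2⟩ := p
    simp at h1 h2 ⊢
    omega

lemma zeta_eq (m n : ℕ) : zeta2 m n =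
    ∑' q : ℕ × ℕ, 1 / (((q.2:ℝ)+q.1+2)^m * ((q.2:ℝ)+1)^n) := by
  rw [zeta2, ← eqv.tsum_eq]
  simp [eqv]

lemma summ0 : Summable (fun q : ℕ × ℕ => (1 / ((q.1:ℝ)+1)^2) * (1 / ((q.2:ℝ)+1)^2)) := by
  have h : Summable (fun n : ℕ => 1 / ((n:ℝ)+1)^2) := by
    have := (summable_nat_add_iff 1).2 (Real.summable_one_div_nat_pow.2 (one_lt_two))
    simpa using this
  exact h.mul_of_nonneg h (fun _ => by positivity) (fun _ => by positivity)

lemma summ31 : Summable (fun q : ℕ × ℕ => 1 / (((q.2:ℝ)+q.1+2)^3 * ((q.2:ℝ)+1)^1)) := by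
  refine Summable.of_nonneg_of_le (fun _ => by positivity) (fun q => ?_) summ0
  rw [one_div_mul_one_div]
  apply one_div_le_one_div_of_le (by positivity)
  have h1 : ((q.1:ℝ)+1)^2 ≤ ((q.2:ℝ)+q.1+2)^2 := by gcongr ?_^2; linarith [(q.2.cast_nonneg : (0:ℝ) ≤ q.2)]
  calc ((q.1:ℝ)+1)^2 * ((q.2:ℝ)+1)^2 ≤ ((q.2:ℝ)+q.1+2)^2 * (((q.2:ℝ)+q.1+2) * (q.2+1)) := by
        rw [pow_two ((q.2:ℝ)+1)]
        gcongr ?_ * (?_ * _)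
        linarith [(q.1.cast_nonneg : (0:ℝ) ≤ q.1)]
    _ = _ := by ring

lemma summ22 : Summable (fun q : ℕ × ℕ => 1 / (((q.2:ℝ)+q.1+2)^2 * ((q.2:ℝ)+1)^2)) := by
  refine Summable.of_nonneg_of_le (fun _ => by positivity) (fun q => ?_) summ0
  rw [one_div_mul_one_div]
  apply one_div_le_one_div_of_le (by positivity)
  gcongr ?_^2 * _
  linarith [(q.2.cast_nonneg : (0:ℝ) ≤ q.2)]

lemma sum_eq : ∑' b : ℕ, ∑' a : ℕ, ENNReal.ofReal
      (2 * (1 / (((a:ℝ)+b+2)^3 * ((a:ℝ)+1)^1)) + 1 / (((a:ℝ)+b+2)^2 * ((a:ℝ)+1)^2))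
      = ENNReal.ofReal (2 * zeta2 3 1 + zeta2 2 2) := by
  rw [zeta_eq, zeta_eq, ← tsum_mul_left, ← (summ31.mul_left 2).tsum_add summ22,
    ENNReal.ofReal_tsum_of_nonneg (fun _ => by positivity) ((summ31.mul_left 2).add summ22),
    ENNReal.tsum_prod']

lemma cons_eq (n : ℕ) : (fun p : ℝ × (Fin n → ℝ) => (Fin.cons p.1 p.2 : Fin (n+1) → ℝ)) =
    (MeasurableEquiv.piFinSuccAbove (fun _ : Fin (n+1) => ℝ) 0).symm := by
  funext p
  simp [MeasurableEquiv.piFinSuccAbove, Fin.insertNthEquiv]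

lemma cons_meas2 (n : ℕ) :
    Measurable (fun p : ℝ × (Fin n → ℝ) => (Fin.cons p.1 p.2 : Fin (n+1) → ℝ)) := by
  rw [cons_eq]
  exact MeasurableEquiv.measurable _

lemma cons_int (n : ℕ) (f : (Fin (n+1) → ℝ) → ENNReal) :
    ∫⁻ u, f u = ∫⁻ p : ℝ × (Fin n → ℝ), f (Fin.cons p.1 p.2) := by
  rw [← (volume_preserving_piFinSuccAbove (fun _ : Fin (n+1) => ℝ) 0).symm.lintegral_comp_emb
    (MeasurableEquiv.measurableEmbedding _)]
  have h := cons_eq n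
  congr 1
  funext p
  exact congrArg f (congrFun h p).symm

lemma cons_int' (n : ℕ) (f : (Fin (n+1) → ℝ) → ENNReal) (hf : Measurable f) :
    ∫⁻ u, f u = ∫⁻ x, ∫⁻ v, f (Fin.cons x v) := by
  rw [cons_int, Measure.volume_eq_prod, lintegral_prod]
  exact (hf.comp (cons_meas2 n)).aemeasurable

lemma cons_meas (n : ℕ) (x : ℝ) :
    Measurable (fun v : Fin n → ℝ => (Fin.cons x v : Fin (n+1) → ℝ)) :=
  (cons_meas2 n).comp (measurable_const.prodMk measurable_id)

lemma four_int (f : (Fin 4 → ℝ) → ENNReal) (hf : Measurable f) :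
    ∫⁻ u, f u = ∫⁻ x, ∫⁻ y, ∫⁻ z, ∫⁻ w, f ![x, y, z, w] := by
  rw [cons_int' _ _ hf]
  congr 1; ext x
  have h1 := hf.comp (cons_meas 3 x)
  refine (cons_int' _ _ h1).trans ?_
  congr 1; ext y
  have h2 := h1.comp (cons_meas 2 y)
  refine (cons_int' _ _ h2).trans ?_
  congr 1; ext z
  have h3 := h2.comp (cons_meas 1 z)
  refine (cons_int' _ _ h3).trans ?_
  congr 1; ext w
  rw [volume_pi, Measure.pi_of_empty _ ![], lintegral_dirac]
  rfl

lemma swap_eq : ∫⁻ x in Ioo (0:ℝ) 1, ENNReal.ofReal (-Real.log x / (1 - x)) *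
      ∫⁻ z in Ioo x 1, ENNReal.ofReal (-Real.log z / (1 - z)) =
    ∫⁻ z in Ioo (0:ℝ) 1, ENNReal.ofReal (-Real.log z / (1 - z)) *
      ∫⁻ x in Ioo 0 z, ENNReal.ofReal (-Real.log x / (1 - x)) := by
  set g : ℝ → ENNReal := fun x => ENNReal.ofReal (-Real.log x / (1 - x)) with hg
  have hgm : Measurable g := by fun_prop
  let T : Set (ℝ × ℝ) := {p | 0 < p.1 ∧ p.1 < p.2 ∧ p.2 < 1}
  have hT : MeasurableSet T := by
    apply MeasurableSet.inter (measurableSet_lt measurable_const measurable_fst)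
    exact MeasurableSet.inter (measurableSet_lt measurable_fst measurable_snd)
      (measurableSet_lt measurable_snd measurable_const)
  have hm : Measurable (T.indicator (fun p => g p.1 * g p.2)) :=
    Measurable.indicator (by fun_prop) hT
  have hs := lintegral_lintegral_swap (μ := volume) (ν := volume)
    (f := fun x z => T.indicator (fun p => g p.1 * g p.2) (x, z)) hm.aemeasurable
  have h1 : ∀ x z, T.indicator (fun p => g p.1 * g p.2) (x, z) =
     (Ioo 0 1).indicator g x * (Ioo x 1).indicator g z := by
    intro x z
    by_cases h : (x, z) ∈ T
    · have h' := h
      obtain ⟨a, b, c⟩ := h'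
      simp only at a b c
      rw [indicator_of_mem h, indicator_of_mem (show x ∈ Ioo 0 1 from ⟨a, b.trans c⟩),
        indicator_of_mem (show z ∈ Ioo x 1 from ⟨b, c⟩)]
    · rw [indicator_of_notMem h]
      by_cases hx : x ∈ Ioo (0:ℝ) 1
      · rw [indicator_of_notMem (s := Ioo x 1), mul_zero]
        exact fun hz => h ⟨hx.1, hz.1, hz.2⟩
      · rw [indicator_of_notMem hx, zero_mul]
  have h2 : ∀ x z, T.indicator (fun p => g p.1 * g p.2) (x, z) =
     (Ioo 0 1).indicator g z * (Ioo 0 z).indicator g x := by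
    intro x z
    by_cases h : (x, z) ∈ T
    · have h' := h
      obtain ⟨a, b, c⟩ := h'
      simp only at a b c
      rw [indicator_of_mem h, indicator_of_mem (show z ∈ Ioo 0 1 from ⟨a.trans b, c⟩),
        indicator_of_mem (show x ∈ Ioo 0 z from ⟨a, b⟩), mul_comm]
    · rw [indicator_of_notMem h]
      by_cases hx : z ∈ Ioo (0:ℝ) 1
      · rw [indicator_of_notMem (s := Ioo 0 z), mul_zero]
        exact fun hz => h ⟨hz.1, hz.2, hx.2⟩
      · rw [indicator_of_notMem hx, zero_mul]
  have e1 : ∀ x, ∫⁻ z, T.indicator (fun p => g p.1 * g p.2) (x, z) =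
      (Ioo 0 1).indicator (fun x => g x * ∫⁻ z in Ioo x 1, g z) x := by
    intro x
    simp_rw [h1]
    rw [lintegral_const_mul _ (hgm.indicator measurableSet_Ioo), lintegral_indicator measurableSet_Ioo,
      indicator_mul_left]
  have e2 : ∀ z, ∫⁻ x, T.indicator (fun p => g p.1 * g p.2) (x, z) =
      (Ioo 0 1).indicator (fun z => g z * ∫⁻ x in Ioo 0 z, g x) z := by
    intro z
    simp_rw [h2]
    rw [lintegral_const_mul _ (hgm.indicator measurableSet_Ioo), lintegral_indicator measurableSet_Ioo,
      indicator_mul_left]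
  simp_rw [e1, e2] at hs
  rwa [lintegral_indicator measurableSet_Ioo, lintegral_indicator measurableSet_Ioo] at hs

lemma S_meas : MeasurableSet {u : Fin 4 → ℝ | (∀ j, 0 ≤ u j ∧ u j ≤ 1) ∧
        u 0 ≤ u 1 ∧ u 0 ≤ u 2 ∧ u 2 ≤ u 3} := by
  measurability

lemma tree_lint : ∫⁻ u in {u : Fin 4 → ℝ | (∀ j, 0 ≤ u j ∧ u j ≤ 1) ∧
        u 0 ≤ u 1 ∧ u 0 ≤ u 2 ∧ u 2 ≤ u 3},
        ENNReal.ofReal (1 / ((1 - u 0) * u 1 * (1 - u 2) * u 3)) =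
    ∫⁻ x in Ioo (0:ℝ) 1, ENNReal.ofReal (-Real.log x / (1 - x)) *
      ∫⁻ z in Ioo x 1, ENNReal.ofReal (-Real.log z / (1 - z)) := by
  rw [← lintegral_indicator S_meas, four_int _ (Measurable.indicator (by fun_prop) S_meas)]
  set p : ℝ → ENNReal := fun x => ENNReal.ofReal (1 / x) with hp
  set q : ℝ → ENNReal := fun x => ENNReal.ofReal (1 / (1 - x)) with hq
  have hpm : Measurable p := by fun_prop
  have hqm : Measurable q := by fun_prop
  have key : ∀ x y z w : ℝ, ({u : Fin 4 → ℝ | (∀ j, 0 ≤ u j ∧ u j ≤ 1) ∧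
        u 0 ≤ u 1 ∧ u 0 ≤ u 2 ∧ u 2 ≤ u 3}).indicator (fun u =>
        ENNReal.ofReal (1 / ((1 - u 0) * u 1 * (1 - u 2) * u 3))) ![x, y, z, w] =
      (Icc 0 1).indicator q x * ((Icc x 1).indicator p y *
        ((Icc x 1).indicator q z * (Icc z 1).indicator p w)) := by
    intro x y z w
    by_cases hx : x ∈ Icc (0:ℝ) 1
    swap
    · rw [indicator_of_notMem hx, zero_mul, indicator_of_notMem]
      exact fun h => hx (h.1 0)
    by_cases hy : y ∈ Icc x 1
    swap
    · rw [indicator_of_notMem hy, zero_mul, mul_zero, indicator_of_notMem]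
      exact fun h => hy ⟨h.2.1, (h.1 1).2⟩
    by_cases hz : z ∈ Icc x 1
    swap
    · rw [indicator_of_notMem hz, zero_mul, mul_zero, mul_zero, indicator_of_notMem]
      exact fun h => hz ⟨h.2.2.1, (h.1 2).2⟩
    by_cases hw : w ∈ Icc z 1
    swap
    · rw [indicator_of_notMem hw, mul_zero, mul_zero, mul_zero, indicator_of_notMem]
      exact fun h => hw ⟨h.2.2.2, (h.1 3).2⟩
    rw [indicator_of_mem hx, indicator_of_mem hy, indicator_of_mem hz, indicator_of_mem hw,
      indicator_of_mem]
    · obtain ⟨hx0, hx1⟩ := hx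
      obtain ⟨hy0, hy1⟩ := hy
      obtain ⟨hz0, hz1⟩ := hz
      obtain ⟨hw0, hw1⟩ := hw
      have a1 : 0 ≤ 1 / (1 - x) := one_div_nonneg.2 (by linarith)
      have a2 : 0 ≤ 1 / y := one_div_nonneg.2 (by linarith)
      have a3 : 0 ≤ 1 / (1 - z) := one_div_nonneg.2 (by linarith)
      simp only [hp, hq]
      rw [← ENNReal.ofReal_mul a3, ← ENNReal.ofReal_mul a2, ← ENNReal.ofReal_mul a1]
      congr 1
      simp
      ring
    · obtain ⟨hx0, hx1⟩ := hx
      obtain ⟨hy0, hy1⟩ := hy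
      obtain ⟨hz0, hz1⟩ := hz
      obtain ⟨hw0, hw1⟩ := hw
      refine ⟨?_, hy0, hz0, hw0⟩
      intro j
      fin_cases j <;> simp <;> constructor <;> linarith
  simp_rw [key]
  have mI : ∀ (f : ℝ → ENNReal) (a : ℝ), Measurable f → Measurable ((Icc a 1).indicator f) :=
    fun f a hf => hf.indicator measurableSet_Icc
  have e : ∀ x, ∫⁻ y, ∫⁻ z, ∫⁻ w, (Icc 0 1).indicator q x * ((Icc x 1).indicator p y *
        ((Icc x 1).indicator q z * (Icc z 1).indicator p w)) =
      (Icc 0 1).indicator (fun x => q x * ((∫⁻ y in Icc x 1, p y) * 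
        ∫⁻ z in Icc x 1, q z * ∫⁻ w in Icc z 1, p w)) x := by
    intro x
    by_cases hx : x ∈ Icc (0:ℝ) 1
    swap
    · simp [indicator_of_notMem hx]
    have hqx : q x ≠ ⊤ := ENNReal.ofReal_ne_top
    rw [indicator_of_mem hx, indicator_of_mem hx]
    have e3 : ∀ y z, ∫⁻ w, q x * ((Icc x 1).indicator p y *
        ((Icc x 1).indicator q z * (Icc z 1).indicator p w)) =
        q x * ((Icc x 1).indicator p y *
        ((Icc x 1).indicator (fun z => q z * ∫⁻ w in Icc z 1, p w) z)) := by
      intro y z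
      rw [lintegral_const_mul _ (by have := mI p z hpm; fun_prop),
        lintegral_const_mul _ (by have := mI p z hpm; fun_prop),
        lintegral_const_mul _ (mI p z hpm), lintegral_indicator measurableSet_Icc, indicator_mul_left]
    simp_rw [e3]
    have e2 : ∀ y, ∫⁻ z, q x * ((Icc x 1).indicator p y *
        ((Icc x 1).indicator (fun z => q z * ∫⁻ w in Icc z 1, p w) z)) =
        q x * ((Icc x 1).indicator p y * ∫⁻ z in Icc x 1, q z * ∫⁻ w in Icc z 1, p w) := by
      intro y
      have hy : (Icc x 1).indicator p y ≠ ⊤ := by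
        rw [indicator_apply]; split_ifs <;> simp [hp]
      rw [lintegral_const_mul' _ _ hqx, lintegral_const_mul' _ _ hy, lintegral_indicator measurableSet_Icc]
    simp_rw [e2]
    rw [lintegral_const_mul' _ _ hqx, lintegral_mul_const _ (mI p x hpm), lintegral_indicator measurableSet_Icc]
  simp_rw [e]
  rw [lintegral_indicator measurableSet_Icc, ← setLIntegral_congr Ioo_ae_eq_Icc]
  refine setLIntegral_congr_fun measurableSet_Ioo (fun x hx => ?_)
  have comb : ∀ z ∈ Ioo (0:ℝ) 1, q z * ENNReal.ofReal (-Real.log z) =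
      ENNReal.ofReal (-Real.log z / (1 - z)) := by
    intro z hz
    simp only [hq]
    rw [← ENNReal.ofReal_mul (one_div_nonneg.2 (by linarith [hz.2]))]
    congr 1; ring
  simp only [hp]
  rw [int_log x hx.1 hx.2.le, ← mul_assoc, comb x hx, ← setLIntegral_congr Ioo_ae_eq_Icc]
  congr 1
  refine setLIntegral_congr_fun measurableSet_Ioo (fun z hz => ?_)
  have hz0 : 0 < z := hx.1.trans hz.1
  rw [int_log z hz0 hz.2.le, comb z ⟨hz0, hz.2⟩]

/-- The arborified multiple zeta value of the two-coloured rooted tree whose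
simple arborification is 2x₀x₀x₁x₁ + x₀x₁x₀x₁: the vertices are the root
(colour 1, variable u 0), a leaf child of the root (colour 0, variable u 1),
another child of the root (colour 1, variable u 2) and its child, a leaf
(colour 0, variable u 3).  The tree integral over the simplex Δ_τ (where u_v
≤ u_w whenever w lies above v) of ∏ du_v/f_{e_v}(u_v), with f₀(u) = u and
f₁(u) = 1-u, equals 2ζ(3,1) + ζ(2,2). -/
theorem arborified_mzv_tree_eq :
    ∫ u in {u : Fin 4 → ℝ | (∀ j, 0 ≤ u j ∧ u j ≤ 1) ∧
        u 0 ≤ u 1 ∧ u 0 ≤ u 2 ∧ u 2 ≤ u 3},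
        1 / ((1 - u 0) * u 1 * (1 - u 2) * u 3)
        ∂(volume : Measure (Fin 4 → ℝ))
      = 2 * zeta2 3 1 + zeta2 2 2 := by
  rw [integral_eq_lintegral_of_nonneg_ae, tree_lint, swap_eq, iter_eq, sum_eq, ENNReal.toReal_ofReal]
  · have : ∀ m n, 0 ≤ zeta2 m n := fun m n => tsum_nonneg (fun _ => by positivity)
    linarith [this 3 1, this 2 2]
  · refine (ae_restrict_iff' S_meas).2 (ae_of_all _ (fun u hu => ?_))
    have h0 := hu.1 0
    have h1 := hu.1 1
    have h2 := hu.1 2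
    have h3 := hu.1 3
    exact one_div_nonneg.2 (mul_nonneg (mul_nonneg (mul_nonneg (by linarith) h1.1) (by linarith)) h3.1)
  · exact Measurable.aestronglyMeasurable (by fun_prop)
end
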